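/- Let 0 < a < b. Then there exist functions w₊, w₋ : [a,b] → ℝ, twice continuously differentiable on [a,b], such that: w₊(a) = w₊(b) = 0, w₊(r) > 0 for all r ∈ (a,b), and −𝓕(r, w₊''(r), w₊'(r)/r) = w₊(r)^p for all r ∈ (a,b); and w₋(a) = w₋(b) = 0, w₋(r) < 0 for all r ∈ (a,b), and −𝓕(r, w₋''(r), w₋'(r)/r) = −|w₋(r)|^p for all r ∈ (a,b). (Equivalently: the Dirichlet problem −F(x,D²u) = |u|^{p−1}u in the annulus A_{a,b} = {x ∈ ℝⁿ : a < |x| < b}, u = 0 on ∂A_{a,b}, has a positive and a negative radial solution for every p > 1.) -/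

import Mathlib

open Real Set

/-- Uniform ellipticity of the radial form `𝓕(r, m, l)` of a uniformly elliptic operator. -/
def UnifElliptic (n : ℕ) (lam Lam : ℝ) (F : ℝ → ℝ → ℝ → ℝ) : Prop :=
  ∀ r : ℝ, 0 < r → ∀ m l s t : ℝ, 0 ≤ s → 0 ≤ t →
    lam * (s + ((n : ℝ) - 1) * t) ≤ F r (m + s) (l + t) - F r m l ∧
      F r (m + s) (l + t) - F r m l ≤ Lam * (s + ((n : ℝ) - 1) * t)

/-!
Solving the equation for the second derivative gives `w'' = G r (w' / r) (w ^ p)` with a Lipschitz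
function `G`, and the positive solution is found by shooting from `w a = 0` with slope `w' a = α`.
For small `α` the superlinear term is negligible and `0 ≤ w b`. If `0 < w b` then `w` is nonnegative
on `[a, b]`, first increasing and then decreasing, and on the longer side of its turning point it is
a monotone nonnegative supersolution of a Lane-Emden equation with drift, so its maximum is bounded
independently of `α`; this is incompatible with a large slope. Hence `w b = 0` for some `α` by
continuity. The power is truncated so that all shots exist on `[a, b]`, at a level they do not reach
for the slopes considered. The negative solution comes from the operator
`(r, m, l) ↦ -F r (-m) (-l)`.
-/

section Calculus

open Filter Topology

variable {f f' : ℝ → ℝ} {x y c C k p : ℝ}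

theorem image_sub_le_mul_sub_of_hasDerivAt_le (hxy : x ≤ y)
    (hf : ∀ t ∈ Icc x y, HasDerivAt f (f' t) t) (hC : ∀ t ∈ Icc x y, f' t ≤ C) :
    f y - f x ≤ C * (y - x) := by
  refine (convex_Icc x y).image_sub_le_mul_sub_of_deriv_le (HasDerivAt.continuousOn hf)
    (fun t ht => (hf t (interior_subset ht)).differentiableAt.differentiableWithinAt)
    (fun t ht => ?_) x (left_mem_Icc.2 hxy) y (right_mem_Icc.2 hxy) hxy
  rw [(hf t (interior_subset ht)).deriv]
  exact hC t (interior_subset ht)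

theorem mul_sub_le_image_sub_of_le_hasDerivAt (hxy : x ≤ y)
    (hf : ∀ t ∈ Icc x y, HasDerivAt f (f' t) t) (hC : ∀ t ∈ Icc x y, C ≤ f' t) :
    C * (y - x) ≤ f y - f x := by
  have hneg := image_sub_le_mul_sub_of_hasDerivAt_le (C := -C) hxy (fun t ht => (hf t ht).neg)
    fun t ht => neg_le_neg (hC t ht)
  simp only [Pi.neg_apply] at hneg
  linarith

theorem antitoneOn_Icc_of_hasDerivAt_nonpos (hf : ∀ t ∈ Icc x y, HasDerivAt f (f' t) t)
    (hf' : ∀ t ∈ Icc x y, f' t ≤ 0) : AntitoneOn f (Icc x y) :=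
  antitoneOn_of_hasDerivWithinAt_nonpos (convex_Icc x y) (HasDerivAt.continuousOn hf)
    (fun t ht => (hf t (interior_subset ht)).hasDerivWithinAt)
    fun t ht => hf' t (interior_subset ht)

theorem monotoneOn_Icc_of_hasDerivAt_nonneg (hf : ∀ t ∈ Icc x y, HasDerivAt f (f' t) t)
    (hf' : ∀ t ∈ Icc x y, 0 ≤ f' t) : MonotoneOn f (Icc x y) :=
  monotoneOn_of_hasDerivWithinAt_nonneg (convex_Icc x y) (HasDerivAt.continuousOn hf)
    (fun t ht => (hf t (interior_subset ht)).hasDerivWithinAt)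
    fun t ht => hf' t (interior_subset ht)

theorem exp_mul_sub_le_of_exp_mul_deriv_add_le (hxy : x ≤ y)
    (hf : ∀ t ∈ Icc x y, HasDerivAt f (f' t) t)
    (hC : ∀ t ∈ Icc x y, exp (k * (t - x)) * (f' t + k * f t) ≤ C) :
    exp (k * (y - x)) * f y - f x ≤ C * (y - x) := by
  have hderiv : ∀ t ∈ Icc x y, HasDerivAt (fun t => exp (k * (t - x)) * f t)
      (exp (k * (t - x)) * (f' t + k * f t)) t := fun t ht =>
    ((((hasDerivAt_id t).sub_const x).const_mul k).exp.mul (hf t ht)).congr_deriv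
      (by simp only [id_eq]; ring)
  simpa using image_sub_le_mul_sub_of_hasDerivAt_le hxy hderiv hC

theorem le_of_hasDerivAt_nonpos_of_lt (hxy : x ≤ y) (hf : ∀ t ∈ Icc x y, HasDerivAt f (f' t) t)
    (hf' : ∀ t ∈ Icc x y, c < f t → f' t ≤ 0) (hx : f x ≤ c) : f y ≤ c := by
  have hlen : 0 < 1 + (y - x) := by linarith
  refine le_of_forall_pos_le_add fun η hη => ?_
  have hε : 0 < η / (1 + (y - x)) := div_pos hη hlen
  -- `f` stays below the strictly increasing barrier `c + ε (1 + (t - x))`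
  have hbarrier := image_le_of_deriv_right_lt_deriv_boundary (HasDerivAt.continuousOn hf)
    (fun t ht => (hf t (Ico_subset_Icc_self ht)).hasDerivWithinAt)
    (B := fun t => c + η / (1 + (y - x)) * (1 + (t - x))) (B' := fun _ => η / (1 + (y - x)))
    (by simpa using hx.trans (le_add_of_nonneg_right hε.le))
    (fun t => ((((hasDerivAt_id t).sub_const x).const_add 1).const_mul _).const_add c
      |>.congr_deriv (mul_one _))
    (fun t ht heq => (hf' t (Ico_subset_Icc_self ht) (by
      rw [heq]
      exact lt_add_of_pos_right c (mul_pos hε (by linarith [ht.1])))).trans_lt hε)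
    (right_mem_Icc.2 hxy)
  rwa [div_mul_cancel₀ _ hlen.ne'] at hbarrier

theorem exists_sign_change_of_nonpos_imp (hxy : x ≤ y) (hf : ContinuousOn f (Icc x y))
    (hx : 0 ≤ f x) (h : ∀ s ∈ Icc x y, ∀ t ∈ Icc s y, f s ≤ 0 → f t ≤ 0) :
    ∃ τ ∈ Icc x y, (∀ t ∈ Icc x τ, 0 ≤ f t) ∧ (τ = y ∨ ∀ t ∈ Icc τ y, f t ≤ 0) := by
  have exists_zero : ∀ t ∈ Icc x y, f t ≤ 0 → ∃ s ∈ Icc x t, f s = 0 := fun t ht hft =>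
    intermediate_value_Icc' ht.1 (hf.mono (Icc_subset_Icc_right ht.2)) ⟨hft, hx⟩
  by_cases hpos : ∀ t ∈ Icc x y, 0 ≤ f t
  · exact ⟨y, right_mem_Icc.2 hxy, hpos, .inl rfl⟩
  push Not at hpos
  obtain ⟨t₀, ht₀, hneg⟩ := hpos
  obtain ⟨s₀, hs₀, hfs₀⟩ := exists_zero t₀ ht₀ hneg.le
  have hcompact : IsCompact (Icc x y ∩ f ⁻¹' {0}) :=
    isCompact_Icc.of_isClosed_subset
      (hf.preimage_isClosed_of_isClosed isClosed_Icc isClosed_singleton) inter_subset_left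
  obtain ⟨τ, ⟨hτ, hfτ : f τ = 0⟩, hleast⟩ :=
    hcompact.exists_isLeast ⟨s₀, ⟨hs₀.1, hs₀.2.trans ht₀.2⟩, hfs₀⟩
  refine ⟨τ, hτ, fun t ht => ?_, .inr fun t ht => h τ hτ t ht hfτ.le⟩
  by_contra! hft
  obtain ⟨s, hs, hfs⟩ := exists_zero t ⟨ht.1, ht.2.trans hτ.2⟩ hft.le
  have hτs : τ ≤ s := hleast ⟨⟨hs.1, hs.2.trans (ht.2.trans hτ.2)⟩, hfs⟩
  have hst : s = t := le_antisymm hs.2 (ht.2.trans hτs)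
  exact hft.ne (hst ▸ hfs)

theorem le_rpow_of_mul_rpow_le_mul {A B u : ℝ} (hA : 0 < A) (hB : 0 ≤ B) (hu : 0 ≤ u)
    (hp : 1 < p) (h : A * u ^ p ≤ B * u) : u ≤ (B / A) ^ (p - 1)⁻¹ := by
  rcases hu.eq_or_lt with rfl | hpos
  · positivity
  rw [le_rpow_inv_iff_of_pos hu (by positivity) (by linarith), rpow_sub_one hpos.ne',
    div_le_div_iff₀ hpos hA]
  linarith

theorem eventually_mul_rpow_le_self (D : ℝ) (hp : 1 < p) : ∀ᶠ t in 𝓝[>] 0, D * t ^ p ≤ t := by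
  have hlim : Tendsto (fun t : ℝ => D * t ^ (p - 1)) (𝓝[>] 0) (𝓝 0) := by
    have hcont : ContinuousAt (fun t : ℝ => D * t ^ (p - 1)) 0 :=
      (continuousAt_rpow_const 0 (p - 1) (.inr (by linarith))).const_mul D
    have h0 : D * (0 : ℝ) ^ (p - 1) = 0 := by rw [zero_rpow (by linarith), mul_zero]
    simpa only [h0] using hcont.tendsto.mono_left nhdsWithin_le_nhds
  filter_upwards [hlim.eventually_le_const one_pos, self_mem_nhdsWithin] with t hle ht
  have ht : 0 < t := ht
  calc D * t ^ p = D * t ^ (p - 1) * t := by rw [rpow_sub_one ht.ne']; field_simp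
    _ ≤ 1 * t := mul_le_mul_of_nonneg_right hle ht.le
    _ = t := one_mul t

end Calculus

section GlobalExistence

open scoped NNReal

variable {E : Type*} [NormedAddCommGroup E] [NormedSpace ℝ E]

/-- The radial retraction of a normed space onto the closed ball of radius `R` about `0`
(for `0 < R`), used to truncate vector fields. -/
noncomputable def radialRetraction (R : ℝ) (x : E) : E := (R / max R ‖x‖) • x

theorem radialRetraction_of_norm_le {R : ℝ} (hR : 0 < R) {x : E} (hx : ‖x‖ ≤ R) :
    radialRetraction R x = x := by
  rw [radialRetraction, max_eq_left hx, div_self hR.ne', one_smul]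

theorem norm_radialRetraction {R : ℝ} (hR : 0 < R) (x : E) :
    ‖radialRetraction R x‖ = R * ‖x‖ / max R ‖x‖ := by
  have hmax : 0 < max R ‖x‖ := lt_max_of_lt_left hR
  rw [radialRetraction, norm_smul, Real.norm_of_nonneg (div_nonneg hR.le hmax.le),
    div_mul_eq_mul_div]

theorem norm_radialRetraction_le {R : ℝ} (hR : 0 < R) (x : E) : ‖radialRetraction R x‖ ≤ R := by
  rw [norm_radialRetraction hR, div_le_iff₀ (lt_max_of_lt_left hR)]
  exact mul_le_mul_of_nonneg_left (le_max_right _ _) hR.le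

theorem norm_radialRetraction_le_norm {R : ℝ} (hR : 0 < R) (x : E) :
    ‖radialRetraction R x‖ ≤ ‖x‖ := by
  rw [norm_radialRetraction hR, div_le_iff₀ (lt_max_of_lt_left hR), mul_comm]
  exact mul_le_mul_of_nonneg_left (le_max_left _ _) (norm_nonneg x)

theorem lipschitzWith_radialRetraction {R : ℝ} (hR : 0 < R) :
    LipschitzWith 2 (radialRetraction R : E → E) := by
  refine LipschitzWith.of_dist_le_mul fun x y => ?_
  set s := max R ‖x‖ with hs
  set t := max R ‖y‖ with ht
  have hs0 : 0 < s := lt_max_of_lt_left hR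
  have ht0 : 0 < t := lt_max_of_lt_left hR
  have hst : |t - s| ≤ ‖x - y‖ :=
    (abs_max_sub_max_le_abs ‖y‖ ‖x‖ R |>.trans_eq' (by rw [max_comm, max_comm ‖x‖])).trans
      (norm_sub_rev x y ▸ abs_norm_sub_norm_le y x)
  have hsplit : radialRetraction R x - radialRetraction R y =
      (R / s) • (x - y) + (R / s * ((t - s) / t)) • y := by
    rw [radialRetraction, radialRetraction, ← hs, ← ht,
      show R / s * ((t - s) / t) = R / s - R / t by field_simp]
    module
  have hRs : R / s ≤ 1 := (div_le_one hs0).2 (le_max_left _ _)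
  have hyt : ‖y‖ / t ≤ 1 := (div_le_one ht0).2 (le_max_right _ _)
  rw [dist_eq_norm, dist_eq_norm, hsplit]
  calc ‖(R / s) • (x - y) + (R / s * ((t - s) / t)) • y‖
      ≤ R / s * ‖x - y‖ + R / s * (|t - s| * (‖y‖ / t)) := by
        refine (norm_add_le _ _).trans_eq ?_
        rw [norm_smul, norm_smul, norm_mul, norm_div (t - s), Real.norm_eq_abs (t - s),
          Real.norm_of_nonneg (by positivity : 0 ≤ R / s), Real.norm_of_nonneg ht0.le]
        ring
    _ ≤ 1 * ‖x - y‖ + 1 * (‖x - y‖ * 1) := by gcongr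
    _ = (2 : ℝ≥0) * ‖x - y‖ := by push_cast; ring

theorem exists_hasDerivAt_of_lipschitzWith_of_norm_le [CompleteSpace E] {v : ℝ → E → E}
    {K L : ℝ≥0} (hv : ∀ t, LipschitzWith K (v t)) (hc : ∀ x, Continuous fun t => v t x) {a b : ℝ}
    (hL : ∀ t ∈ Icc (a - 1) (b + 1), ∀ x, ‖v t x‖ ≤ L) (hab : a ≤ b) (x₀ : E) :
    ∃ x : ℝ → E, x a = x₀ ∧ ∀ t ∈ Icc a b, HasDerivAt x (v t (x t)) t := by
  have ha : a ∈ Icc (a - 1) (b + 1) := ⟨by linarith, by linarith⟩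
  have hpicard : IsPicardLindelof v (tmin := a - 1) (tmax := b + 1) ⟨a, ha⟩ x₀
      (L * .mk (b - a + 1) (by linarith)) 0 L K :=
    { lipschitzOnWith := fun t _ => (hv t).lipschitzOnWith
      continuousOn := fun x _ => (hc x).continuousOn
      norm_le := fun t ht x _ => hL t ht x
      mul_max_le := by
        simp only [NNReal.coe_mul, NNReal.coe_mk, NNReal.coe_zero, sub_zero]
        exact mul_le_mul_of_nonneg_left (max_le (by linarith) (by linarith)) L.2 }
  obtain ⟨x, hxa, hx⟩ := hpicard.exists_eq_forall_mem_Icc_hasDerivWithinAt₀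
  exact ⟨x, hxa, fun t ht => (hx t ⟨by linarith [ht.1], by linarith [ht.2]⟩).hasDerivAt
    (Icc_mem_nhds (by linarith [ht.1]) (by linarith [ht.2]))⟩

theorem exists_hasDerivAt_of_lipschitzWith [CompleteSpace E] {v : ℝ → E → E} {K : ℝ≥0}
    (hv : ∀ t, LipschitzWith K (v t)) (hc : ∀ x, Continuous fun t => v t x) {a b : ℝ}
    (hab : a ≤ b) (x₀ : E) :
    ∃ x : ℝ → E, x a = x₀ ∧ ∀ t ∈ Icc a b, HasDerivAt x (v t (x t)) t := by
  obtain ⟨C, hC⟩ := (isCompact_Icc (a := a - 1) (b := b + 1)).exists_bound_of_continuousOn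
    (hc 0).continuousOn
  have hC0 : 0 ≤ C := (norm_nonneg _).trans (hC a ⟨by linarith, by linarith⟩)
  have hgrowth : ∀ t ∈ Icc (a - 1) (b + 1), ∀ x, ‖v t x‖ ≤ K * ‖x‖ + C := fun t ht x => by
    have hlip := (hv t).dist_le_mul x 0
    rw [dist_eq_norm, dist_zero_right] at hlip
    exact (norm_le_norm_sub_add _ _).trans (add_le_add hlip (hC t ht))
  -- Gronwall's inequality keeps the truncated flow in the ball where nothing is truncated.
  set R := gronwallBound (‖x₀‖ + 1) K C (b - a)
  have hmono := gronwallBound_mono (δ := ‖x₀‖ + 1) (by positivity) hC0 K.2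
  have hR0 : 0 < R := by
    have hle := hmono (sub_nonneg.2 hab)
    rw [gronwallBound_x0] at hle
    exact lt_of_lt_of_le (by positivity) hle
  have hL : ∀ t ∈ Icc (a - 1) (b + 1), ∀ x, ‖v t (radialRetraction R x)‖ ≤ K * R + C :=
    fun t ht x => (hgrowth t ht _).trans (add_le_add_left
      (mul_le_mul_of_nonneg_left (norm_radialRetraction_le hR0 x) K.2) C)
  obtain ⟨x, hxa, hx⟩ := exists_hasDerivAt_of_lipschitzWith_of_norm_le
    (v := fun t x => v t (radialRetraction R x)) (L := .mk (K * R + C) (by positivity))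
    (fun t => (hv t).comp (lipschitzWith_radialRetraction hR0)) (fun x => hc _) hL hab x₀
  refine ⟨x, hxa, fun t ht => ?_⟩
  have hbound : ‖x t‖ ≤ R := (norm_le_gronwallBound_of_norm_deriv_right_le
    (HasDerivAt.continuousOn hx)
    (fun s hs => (hx s (Ico_subset_Icc_self hs)).hasDerivWithinAt)
    (by rw [hxa]; exact le_add_of_nonneg_right zero_le_one)
    (fun s hs => (hgrowth s ⟨by linarith [hs.1], by linarith [hs.2]⟩ _).trans (add_le_add_left
      (mul_le_mul_of_nonneg_left (norm_radialRetraction_le_norm hR0 _) K.2) C)) t ht).trans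
    (hmono (by linarith [ht.2]))
  simpa only [radialRetraction_of_norm_le hR0 hbound] using hx t ht

end GlobalExistence

section TruncatedPower

open scoped NNReal

/-- The power nonlinearity `u ↦ u ^ p` frozen outside `[0, M]`, which makes it globally Lipschitz
without affecting functions with values in `[0, M]`. -/
noncomputable def truncPow (p M u : ℝ) : ℝ := max 0 (min M u) ^ p

variable {p M : ℝ}

theorem truncPow_nonneg (p M u : ℝ) : 0 ≤ truncPow p M u := rpow_nonneg (le_max_left _ _) p

theorem truncPow_of_mem_Icc {u : ℝ} (hu : u ∈ Icc 0 M) : truncPow p M u = u ^ p := by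
  rw [truncPow, min_eq_right hu.2, max_eq_right hu.1]

theorem truncPow_zero (hp : p ≠ 0) (hM : 0 ≤ M) : truncPow p M 0 = 0 := by
  rw [truncPow_of_mem_Icc (left_mem_Icc.2 hM), zero_rpow hp]

theorem monotone_truncPow (hp : 0 ≤ p) : Monotone (truncPow p M) := fun _ _ huv =>
  rpow_le_rpow (le_max_left _ _) (max_le_max le_rfl (min_le_min le_rfl huv)) hp

theorem exists_lipschitzWith_truncPow (hp : 1 ≤ p) (hM : 0 ≤ M) :
    ∃ K : ℝ≥0, LipschitzWith K (truncPow p M) := by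
  have hloc : LocallyLipschitzOn (Icc 0 M) fun u : ℝ => u ^ p :=
    ((contDiff_rpow_const_of_le (n := 1) (by simpa using hp)).locallyLipschitz).locallyLipschitzOn
  obtain ⟨K, hK⟩ := hloc.exists_lipschitzOnWith_of_compact isCompact_Icc
  have hclamp : LipschitzWith 1 fun u : ℝ => max 0 (min M u) :=
    (LipschitzWith.id.const_min M).const_max 0
  refine ⟨K * 1, lipschitzOnWith_univ.1 (hK.comp hclamp.lipschitzOnWith fun u _ => ?_)⟩
  exact ⟨le_max_left _ _, max_le hM (min_le_left _ _)⟩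

end TruncatedPower

/-- A nonnegative, nonincreasing supersolution `u` on `[x, y]` of the Lane-Emden equation with
drift, `-u'' - k u' = κ u ^ p`; the functions `u'` and `u''` are the derivatives of `u`. -/
structure IsDecreasingSupersolution (k κ p x y : ℝ) (u u' u'' : ℝ → ℝ) : Prop where
  deriv_fst : ∀ t ∈ Icc x y, HasDerivAt u (u' t) t
  deriv_snd : ∀ t ∈ Icc x y, HasDerivAt u' (u'' t) t
  nonneg : ∀ t ∈ Icc x y, 0 ≤ u t
  slope_nonpos : ∀ t ∈ Icc x y, u' t ≤ 0
  le_neg : ∀ t ∈ Icc x y, u'' t + k * u' t ≤ -(κ * u t ^ p)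

/-- The bound for the maximum of a decreasing supersolution on an interval of length `2 δ`. -/
noncomputable def aprioriBound (k κ δ p : ℝ) : ℝ :=
  (1 + exp (k * δ) ^ 2) * (exp (k * δ) ^ 2 / (κ * δ ^ 2)) ^ (p - 1)⁻¹

theorem aprioriBound_nonneg {k κ δ p : ℝ} (hκ : 0 ≤ κ) : 0 ≤ aprioriBound k κ δ p := by
  unfold aprioriBound
  positivity

namespace IsDecreasingSupersolution

variable {k κ p x y : ℝ} {u u' u'' : ℝ → ℝ}

theorem antitoneOn (h : IsDecreasingSupersolution k κ p x y u u' u'') :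
    AntitoneOn u (Icc x y) :=
  antitoneOn_Icc_of_hasDerivAt_nonpos h.deriv_fst h.slope_nonpos

theorem exp_mul_slope_le (h : IsDecreasingSupersolution k κ p x y u u' u'') (hk : 0 ≤ k)
    (hκ : 0 ≤ κ) (hp : 0 ≤ p) {s t : ℝ} (hs : x ≤ s) (hst : s ≤ t) (ht : t ≤ y) :
    exp (k * (t - s)) * u' t ≤ u' s - κ * u t ^ p * (t - s) := by
  have hsub : Icc s t ⊆ Icc x y := Icc_subset_Icc hs ht
  have htmem : t ∈ Icc x y := ⟨hs.trans hst, ht⟩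
  have hint : exp (k * (t - s)) * u' t - u' s ≤ -(κ * u t ^ p) * (t - s) := by
    refine exp_mul_sub_le_of_exp_mul_deriv_add_le hst (fun r hr => h.deriv_snd r (hsub hr))
      fun r hr => ?_
    have hpow : u t ^ p ≤ u r ^ p :=
      rpow_le_rpow (h.nonneg t htmem) (h.antitoneOn (hsub hr) htmem hr.2) hp
    have hexp : 1 ≤ exp (k * (r - s)) :=
      one_le_exp (mul_nonneg hk (sub_nonneg.2 hr.1))
    have hpos : 0 ≤ κ * u t ^ p := mul_nonneg hκ (rpow_nonneg (h.nonneg t htmem) p)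
    calc exp (k * (r - s)) * (u'' r + k * u' r)
        ≤ exp (k * (r - s)) * -(κ * u t ^ p) := by
          gcongr
          exact (h.le_neg r (hsub hr)).trans
            (neg_le_neg (mul_le_mul_of_nonneg_left hpow hκ))
      _ ≤ -(κ * u t ^ p) := by
          rw [mul_neg]
          exact neg_le_neg (le_mul_of_one_le_left hpos hexp)
  linarith

theorem exp_mul_slope_le_slope (h : IsDecreasingSupersolution k κ p x y u u' u'') (hk : 0 ≤ k)
    (hκ : 0 ≤ κ) (hp : 0 ≤ p) {s t δ : ℝ} (hs : x ≤ s) (hst : s ≤ t) (ht : t ≤ y)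
    (hδ : t - s ≤ δ) : exp (k * δ) * u' t ≤ u' s := by
  have htmem : t ∈ Icc x y := ⟨hs.trans hst, ht⟩
  calc exp (k * δ) * u' t ≤ exp (k * (t - s)) * u' t :=
        mul_le_mul_of_nonpos_right (exp_le_exp.2 (mul_le_mul_of_nonneg_left hδ hk))
          (h.slope_nonpos t htmem)
    _ ≤ u' s - κ * u t ^ p * (t - s) := h.exp_mul_slope_le hk hκ hp hs hst ht
    _ ≤ u' s := sub_le_self _ (mul_nonneg (mul_nonneg hκ (rpow_nonneg (h.nonneg t htmem) p))
        (sub_nonneg.2 hst))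

theorem le_sub_exp_mul_slope (h : IsDecreasingSupersolution k κ p x y u u' u'') (hk : 0 ≤ k)
    (hκ : 0 ≤ κ) (hp : 0 ≤ p) {s t : ℝ} (hs : x ≤ s) (hst : s ≤ t) (ht : t ≤ y) :
    u s ≤ u t - exp (k * (t - s)) * u' t * (t - s) := by
  have hmean := mul_sub_le_image_sub_of_le_hasDerivAt hst
    (fun r hr => h.deriv_fst r ⟨hs.trans hr.1, hr.2.trans ht⟩)
    fun r hr => h.exp_mul_slope_le_slope hk hκ hp (hs.trans hr.1) hr.2 ht
      (sub_le_sub_left hr.1 t)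
  linarith

theorem neg_slope_mul_sub_le (h : IsDecreasingSupersolution k κ p x y u u' u'') (hk : 0 ≤ k)
    (hκ : 0 ≤ κ) (hp : 0 ≤ p) {s t : ℝ} (hs : x ≤ s) (hst : s ≤ t) (ht : t ≤ y) :
    -u' s * (t - s) ≤ exp (k * (t - s)) * u s := by
  have hmean := image_sub_le_mul_sub_of_hasDerivAt_le hst
    (fun r hr => (h.deriv_fst r ⟨hs.trans hr.1, hr.2.trans ht⟩).const_mul (exp (k * (t - s))))
    fun r hr => h.exp_mul_slope_le_slope hk hκ hp hs hr.1 (hr.2.trans ht)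
      (sub_le_sub_right hr.2 s)
  have hpos : 0 ≤ exp (k * (t - s)) * u t :=
    mul_nonneg (exp_pos _).le (h.nonneg t ⟨hs.trans hst, ht⟩)
  linarith

/-- Superlinearity enters here: with `U` the value and `-Q` the slope at the midpoint, the equation
on the left half gives `κ U ^ p δ ≤ e Q`, while positivity on the right half gives `Q δ ≤ e U`. -/
theorem le_aprioriBound (h : IsDecreasingSupersolution k κ p x y u u' u'') (hk : 0 ≤ k)
    (hκ : 0 < κ) (hp : 1 < p) {δ : ℝ} (hδ : 0 < δ) (hxy : x + 2 * δ ≤ y) :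
    u x ≤ aprioriBound k κ δ p := by
  have hp0 : 0 ≤ p := by linarith
  have hxm : x ≤ x + δ := by linarith
  have hmδ : x + δ ≤ x + δ + δ := by linarith
  have hδy : x + δ + δ ≤ y := by linarith
  have hU : 0 ≤ u (x + δ) := h.nonneg _ ⟨hxm, hmδ.trans hδy⟩
  have hleft := h.le_sub_exp_mul_slope hk hκ.le hp0 le_rfl hxm (hmδ.trans hδy)
  have hright := h.neg_slope_mul_sub_le hk hκ.le hp0 hxm hmδ hδy
  have hpow := h.exp_mul_slope_le hk hκ.le hp0 le_rfl hxm (hmδ.trans hδy)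
  simp only [add_sub_cancel_left] at hleft hright hpow
  set U := u (x + δ)
  set Q := -u' (x + δ)
  set e := exp (k * δ)
  have hslope : e * Q * δ ≤ e ^ 2 * U := by
    nlinarith [mul_le_mul_of_nonneg_left hright (exp_pos (k * δ)).le]
  have hmid : U ≤ (e ^ 2 / (κ * δ ^ 2)) ^ (p - 1)⁻¹ := by
    refine le_rpow_of_mul_rpow_le_mul (by positivity) (by positivity) hU hp ?_
    calc κ * δ ^ 2 * U ^ p = κ * U ^ p * δ * δ := by ring
      _ ≤ e * Q * δ := mul_le_mul_of_nonneg_right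
          (by linarith [h.slope_nonpos x ⟨le_rfl, hxm.trans (hmδ.trans hδy)⟩]) hδ.le
      _ ≤ e ^ 2 * U := hslope
  calc u x ≤ (1 + e ^ 2) * U := by linarith
    _ ≤ aprioriBound k κ δ p := mul_le_mul_of_nonneg_left hmid (by positivity)

end IsDecreasingSupersolution

section Shooting

open scoped NNReal

/-- The structural conditions on the right-hand side of `w'' = g r w' (f w)` under which the
shooting method works; its last argument stands for the value of the nonnegative forcing `f w`. -/
structure IsShootingField (g : ℝ → ℝ → ℝ → ℝ) (K : ℝ≥0) (κ : ℝ) : Prop where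
  pos : 0 < κ
  continuous_time : ∀ q c, Continuous fun r => g r q c
  lipschitz : ∀ r, LipschitzWith K fun x : ℝ × ℝ => g r x.1 x.2
  apply_zero : ∀ r, g r 0 0 = 0
  apply_zero_le : ∀ r c, 0 ≤ c → g r 0 c ≤ -(κ * c)
  nonpos : ∀ r q c, 0 ≤ q → 0 ≤ c → g r q c ≤ 0

/-- The functions `w` and `z = w'` solve `w'' = g r w' (f w)` on `[a, b]` with `w a = 0` and
shooting slope `w' a = α`. -/
structure IsShot (g : ℝ → ℝ → ℝ → ℝ) (f : ℝ → ℝ) (a b α : ℝ) (w z : ℝ → ℝ) : Prop where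
  left : w a = 0
  slope : z a = α
  deriv_fst : ∀ r ∈ Icc a b, HasDerivAt w (z r) r
  deriv_snd : ∀ r ∈ Icc a b, HasDerivAt z (g r (z r) (f (w r))) r

variable {g : ℝ → ℝ → ℝ → ℝ} {K Kf : ℝ≥0} {κ p a b α : ℝ} {f w z : ℝ → ℝ}

namespace IsShootingField

theorem abs_sub_le (hg : IsShootingField g K κ) (r q q' c c' : ℝ) :
    |g r q c - g r q' c'| ≤ K * (|q - q'| + |c - c'|) := by
  refine ((hg.lipschitz r).dist_le_mul (q, c) (q', c')).trans ?_
  exact mul_le_mul_of_nonneg_left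
    (max_le_add_of_nonneg (abs_nonneg (q - q')) (abs_nonneg (c - c'))) K.2

theorem neg_le (hg : IsShootingField g K κ) (r q : ℝ) {c : ℝ} (hc : 0 ≤ c) :
    -(K * (|q| + c)) ≤ g r q c := by
  have hdist := hg.abs_sub_le r q 0 c 0
  rw [hg.apply_zero, sub_zero, sub_zero, sub_zero, abs_of_nonneg hc] at hdist
  exact (abs_le.1 hdist).1

theorem le_sub (hg : IsShootingField g K κ) (r q : ℝ) {c : ℝ} (hc : 0 ≤ c) :
    g r q c ≤ K * |q| - κ * c := by
  have hdist := hg.abs_sub_le r q 0 c c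
  rw [sub_self, abs_zero, add_zero, sub_zero] at hdist
  linarith [(abs_le.1 hdist).2, hg.apply_zero_le r c hc]

theorem exists_lipschitzWith_planar (hg : IsShootingField g K κ) (hf : LipschitzWith Kf f) :
    ∃ C : ℝ≥0, ∀ t, LipschitzWith C fun x : ℝ × ℝ => (x.2, g t x.2 (f x.1)) :=
  ⟨_, fun t => LipschitzWith.prod_snd.prodMk ((hg.lipschitz t).comp
    (LipschitzWith.prod_snd.prodMk (hf.comp LipschitzWith.prod_fst)))⟩

theorem exists_isShot (hg : IsShootingField g K κ) (hf : LipschitzWith Kf f) (hab : a ≤ b)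
    (α : ℝ) : ∃ w z, IsShot g f a b α w z := by
  obtain ⟨C, hC⟩ := hg.exists_lipschitzWith_planar hf
  obtain ⟨x, hxa, hx⟩ := exists_hasDerivAt_of_lipschitzWith hC
    (fun x => continuous_const.prodMk (hg.continuous_time _ _)) hab (0, α)
  exact ⟨fun t => (x t).1, fun t => (x t).2, by rw [hxa], by rw [hxa],
    fun r hr => (hx r hr).fst, fun r hr => (hx r hr).snd⟩

end IsShootingField

namespace IsShot

theorem hasDerivAt_prodMk (h : IsShot g f a b α w z) {r : ℝ} (hr : r ∈ Icc a b) :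
    HasDerivAt (fun t => (w t, z t)) (z r, g r (z r) (f (w r))) r :=
  (h.deriv_fst r hr).prodMk (h.deriv_snd r hr)

theorem continuousOn_prodMk (h : IsShot g f a b α w z) :
    ContinuousOn (fun t => (w t, z t)) (Icc a b) :=
  HasDerivAt.continuousOn fun _ hr => h.hasDerivAt_prodMk hr

theorem slope_le (h : IsShot g f a b α w z) (hg : IsShootingField g K κ) (hf : ∀ u, 0 ≤ f u)
    {r t c : ℝ} (hr : r ∈ Icc a b) (ht : t ∈ Icc r b) (hc : 0 ≤ c) (hzr : z r ≤ c) : z t ≤ c :=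
  le_of_hasDerivAt_nonpos_of_lt ht.1
    (fun s hs => h.deriv_snd s ⟨hr.1.trans hs.1, hs.2.trans ht.2⟩)
    (fun _ _ hlt => hg.nonpos _ _ _ (hc.trans hlt.le) (hf _)) hzr

theorem le_mul_length (h : IsShot g f a b α w z) (hg : IsShootingField g K κ)
    (hf : ∀ u, 0 ≤ f u) (hα : 0 ≤ α) {r : ℝ} (hr : r ∈ Icc a b) : w r ≤ α * (b - a) := by
  have ha : a ∈ Icc a b := left_mem_Icc.2 (hr.1.trans hr.2)
  have hmean := image_sub_le_mul_sub_of_hasDerivAt_le hr.1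
    (fun t ht => h.deriv_fst t ⟨ht.1, ht.2.trans hr.2⟩)
    fun t ht => h.slope_le hg hf ha ⟨ht.1, ht.2.trans hr.2⟩ hα h.slope.le
  rw [h.left, sub_zero] at hmean
  exact hmean.trans (mul_le_mul_of_nonneg_left (sub_le_sub_right hr.2 a) hα)

theorem exists_turning_point (h : IsShot g f a b α w z) (hg : IsShootingField g K κ)
    (hf : ∀ u, 0 ≤ f u) (hα : 0 ≤ α) (hab : a ≤ b) :
    ∃ τ ∈ Icc a b, (∀ r ∈ Icc a τ, 0 ≤ z r) ∧ (τ = b ∨ ∀ r ∈ Icc τ b, z r ≤ 0) :=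
  exists_sign_change_of_nonpos_imp hab (HasDerivAt.continuousOn h.deriv_snd)
    (h.slope.symm ▸ hα) fun _ hr _ ht => h.slope_le hg hf hr ht le_rfl

theorem le_slope (h : IsShot g f a b α w z) (hg : IsShootingField g K κ) (hf : ∀ u, 0 ≤ f u)
    {r C β : ℝ} (hr : r ∈ Icc a b) (hz : ∀ t ∈ Icc a r, 0 ≤ z t) (hC : ∀ t ∈ Icc a r, f (w t) ≤ C)
    (hα : exp (K * (b - a)) * (β + K * C * (b - a)) ≤ α) : β ≤ z r := by
  have ha : a ∈ Icc a r := left_mem_Icc.2 hr.1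
  have hrr : r ∈ Icc a r := right_mem_Icc.2 hr.1
  have hKC : 0 ≤ K * C := mul_nonneg K.2 ((hf _).trans (hC a ha))
  have hexp : ∀ t ∈ Icc a r, exp (K * (t - a)) ≤ exp (K * (b - a)) := fun t ht =>
    exp_le_exp.2 (mul_le_mul_of_nonneg_left (sub_le_sub_right (ht.2.trans hr.2) a) K.2)
  have hint : exp (K * (r - a)) * -z r - -z a ≤ exp (K * (b - a)) * (K * C) * (r - a) := by
    refine exp_mul_sub_le_of_exp_mul_deriv_add_le hr.1
      (fun t ht => (h.deriv_snd t ⟨ht.1, ht.2.trans hr.2⟩).neg) fun t ht => ?_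
    have hgrowth := hg.neg_le t (z t) (hf (w t))
    rw [abs_of_nonneg (hz t ht)] at hgrowth
    have hforce : K * f (w t) ≤ K * C := mul_le_mul_of_nonneg_left (hC t ht) K.2
    calc exp (K * (t - a)) * (-g t (z t) (f (w t)) + K * -z t)
        ≤ exp (K * (t - a)) * (K * C) :=
          mul_le_mul_of_nonneg_left (by linarith) (exp_pos _).le
      _ ≤ exp (K * (b - a)) * (K * C) := mul_le_mul_of_nonneg_right (hexp t ht) hKC
  have hlen : exp (K * (b - a)) * (K * C) * (r - a) ≤ exp (K * (b - a)) * (K * C) * (b - a) :=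
    mul_le_mul_of_nonneg_left (sub_le_sub_right hr.2 a) (mul_nonneg (exp_pos _).le hKC)
  refine le_of_mul_le_mul_left ?_ (exp_pos (K * (b - a)))
  calc exp (K * (b - a)) * β ≤ exp (K * (r - a)) * z r := by linarith [h.slope]
    _ ≤ exp (K * (b - a)) * z r := mul_le_mul_of_nonneg_right (hexp r hrr) (hz r hrr)

theorem mul_length_le_right (h : IsShot g f a b α w z) (hg : IsShootingField g K κ)
    (hf : ∀ u, 0 ≤ f u) (hab : a ≤ b) {C β : ℝ} (hC : ∀ r ∈ Icc a b, f (w r) ≤ C) (hβ : 0 < β)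
    (hα : exp (K * (b - a)) * (β + K * C * (b - a)) ≤ α) : β * (b - a) ≤ w b := by
  have hC0 : 0 ≤ C := (hf _).trans (hC a (left_mem_Icc.2 hab))
  have hL : 0 ≤ b - a := sub_nonneg.2 hab
  obtain ⟨τ, hτ, hup, hdown⟩ := h.exists_turning_point hg hf (hα.trans' (by positivity)) hab
  have hslope : ∀ r ∈ Icc a τ, β ≤ z r := fun r hr =>
    h.le_slope hg hf ⟨hr.1, hr.2.trans hτ.2⟩ (fun t ht => hup t ⟨ht.1, ht.2.trans hr.2⟩)
      (fun t ht => hC t ⟨ht.1, ht.2.trans (hr.2.trans hτ.2)⟩) hα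
  obtain rfl : τ = b := hdown.resolve_right fun hdown =>
    (hβ.trans_le (hslope τ (right_mem_Icc.2 hτ.1))).not_ge (hdown τ (left_mem_Icc.2 hτ.2))
  simpa only [h.left, sub_zero] using
    mul_sub_le_image_sub_of_le_hasDerivAt hab h.deriv_fst hslope

theorem antitoneOn_of_nonpos (h : IsShot g f a b α w z) (hg : IsShootingField g K κ)
    (hf : ∀ u, 0 ≤ f u) {t : ℝ} (ht : t ∈ Ioc a b) (hw : w t ≤ 0) : AntitoneOn w (Icc t b) := by
  have hsub : Icc a t ⊆ Icc a b := Icc_subset_Icc_right ht.2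
  obtain ⟨r, hr, hzr⟩ := exists_hasDerivAt_eq_slope w z ht.1
    (HasDerivAt.continuousOn fun s hs => h.deriv_fst s (hsub hs))
    fun s hs => h.deriv_fst s (hsub (Ioo_subset_Icc_self hs))
  have hz : z r ≤ 0 := by
    rw [hzr, h.left, sub_zero]
    exact div_nonpos_of_nonpos_of_nonneg hw (sub_nonneg.2 ht.1.le)
  exact antitoneOn_Icc_of_hasDerivAt_nonpos
    (fun s hs => h.deriv_fst s ⟨ht.1.le.trans hs.1, hs.2⟩)
    fun s hs => h.slope_le hg hf (hsub (Ioo_subset_Icc_self hr)) ⟨hr.2.le.trans hs.1, hs.2⟩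
      le_rfl hz

theorem nonneg_of_right_nonneg (h : IsShot g f a b α w z) (hg : IsShootingField g K κ)
    (hf : ∀ u, 0 ≤ f u) (hb : 0 ≤ w b) : ∀ r ∈ Icc a b, 0 ≤ w r := fun r hr => by
  rcases hr.1.eq_or_lt with rfl | har
  · exact h.left.ge
  by_contra! hneg
  exact (hneg.trans_le hb).not_ge
    (h.antitoneOn_of_nonpos hg hf ⟨har, hr.2⟩ hneg.le (left_mem_Icc.2 hr.2)
      (right_mem_Icc.2 hr.2) hr.2)

theorem slope_eq_zero_of_eq_zero (h : IsShot g f a b α w z) (hg : IsShootingField g K κ)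
    (hfl : LipschitzWith Kf f) (hf0 : f 0 = 0) {s : ℝ} (hs : s ∈ Icc a b) (hws : w s = 0)
    (hzs : z s = 0) : α = 0 := by
  obtain ⟨C, hC⟩ := hg.exists_lipschitzWith_planar hfl
  have hsub : Icc a s ⊆ Icc a b := Icc_subset_Icc_right hs.2
  have hzero : EqOn (fun t => (w t, z t)) (fun _ => 0) (Icc a s) :=
    ODE_solution_unique_of_mem_Icc_left (s := fun _ => univ) (fun t _ => (hC t).lipschitzOnWith)
      (h.continuousOn_prodMk.mono hsub)
      (fun r hr => (h.hasDerivAt_prodMk (hsub (Ioc_subset_Icc_self hr))).hasDerivWithinAt)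
      (fun _ _ => mem_univ _) continuousOn_const
      (fun r _ => by
        simpa [hf0, hg.apply_zero, Prod.mk_zero_zero] using
          hasDerivWithinAt_const r (Iic r) (0 : ℝ × ℝ))
      (fun _ _ => mem_univ _) (by simp only [hws, hzs, Prod.mk_zero_zero])
  exact h.slope ▸ congrArg Prod.snd (hzero (left_mem_Icc.2 hs.1))

theorem pos_of_right_eq_zero (h : IsShot g f a b α w z) (hg : IsShootingField g K κ)
    (hf : ∀ u, 0 ≤ f u) (hfl : LipschitzWith Kf f) (hf0 : f 0 = 0) (hα : α ≠ 0) (hb : w b = 0) :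
    ∀ r ∈ Ioo a b, 0 < w r := fun t ht => by
  by_contra! hwt
  have hanti := h.antitoneOn_of_nonpos hg hf ⟨ht.1, ht.2.le⟩ hwt
  have hzero : ∀ s ∈ Icc t b, w s = 0 := fun s hs => le_antisymm
    ((hanti (left_mem_Icc.2 ht.2.le) hs hs.1).trans hwt)
    (hb.ge.trans (hanti hs (right_mem_Icc.2 ht.2.le) hs.2))
  obtain ⟨s, hts, hsb⟩ := exists_between ht.2
  have hs : s ∈ Icc a b := ⟨ht.1.le.trans hts.le, hsb.le⟩
  have hzs : z s = 0 := by
    refine (h.deriv_fst s hs).unique ((hasDerivAt_const s (0 : ℝ)).congr_of_eventuallyEq ?_)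
    filter_upwards [Icc_mem_nhds hts hsb] with x hx using hzero x hx
  exact hα (h.slope_eq_zero_of_eq_zero hg hfl hf0 hs (hzero s ⟨hts.le, hsb.le⟩) hzs)

theorem isDecreasingSupersolution (h : IsShot g f a b α w z) (hg : IsShootingField g K κ)
    (hw : ∀ r ∈ Icc a b, 0 ≤ w r) (hfw : ∀ r ∈ Icc a b, f (w r) = w r ^ p) {τ : ℝ} (hτ : a ≤ τ)
    (hz : ∀ r ∈ Icc τ b, z r ≤ 0) :
    IsDecreasingSupersolution K κ p τ b w z fun r => g r (z r) (f (w r)) where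
  deriv_fst r hr := h.deriv_fst r ⟨hτ.trans hr.1, hr.2⟩
  deriv_snd r hr := h.deriv_snd r ⟨hτ.trans hr.1, hr.2⟩
  nonneg r hr := hw r ⟨hτ.trans hr.1, hr.2⟩
  slope_nonpos := hz
  le_neg r hr := by
    have hrab : r ∈ Icc a b := ⟨hτ.trans hr.1, hr.2⟩
    have hle := hg.le_sub r (z r) (rpow_nonneg (hw r hrab) p)
    rw [abs_of_nonpos (hz r hr)] at hle
    rw [hfw r hrab]
    linarith

theorem isDecreasingSupersolution_comp_neg (h : IsShot g f a b α w z)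
    (hg : IsShootingField g K κ) (hw : ∀ r ∈ Icc a b, 0 ≤ w r)
    (hfw : ∀ r ∈ Icc a b, f (w r) = w r ^ p) {τ : ℝ} (hτ : τ ≤ b)
    (hz : ∀ r ∈ Icc a τ, 0 ≤ z r) :
    IsDecreasingSupersolution K κ p (-τ) (-a) (fun r => w (-r)) (fun r => -z (-r))
      fun r => g (-r) (z (-r)) (f (w (-r))) := by
  have hmem : ∀ r ∈ Icc (-τ) (-a), -r ∈ Icc a τ := fun r hr => ⟨le_neg.1 hr.2, neg_le.1 hr.1⟩
  have hmem' : ∀ r ∈ Icc (-τ) (-a), -r ∈ Icc a b := fun r hr =>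
    ⟨(hmem r hr).1, (hmem r hr).2.trans hτ⟩
  refine ⟨fun r hr => ?_, fun r hr => ?_, fun r hr => hw _ (hmem' r hr),
    fun r hr => neg_nonpos.2 (hz _ (hmem r hr)), fun r hr => ?_⟩
  · exact ((h.deriv_fst _ (hmem' r hr)).comp r (hasDerivAt_neg r)).congr_deriv (mul_neg_one _)
  · exact ((h.deriv_snd _ (hmem' r hr)).comp r (hasDerivAt_neg r)).neg.congr_deriv (by ring)
  · have hle := hg.le_sub (-r) (z (-r)) (rpow_nonneg (hw _ (hmem' r hr)) p)
    rw [abs_of_nonneg (hz _ (hmem r hr))] at hle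
    rw [hfw _ (hmem' r hr)]
    linarith

theorem le_aprioriBound (h : IsShot g f a b α w z) (hg : IsShootingField g K κ)
    (hf : ∀ u, 0 ≤ f u) (hα : 0 ≤ α) (hp : 1 < p) (hab : a < b) (hw : ∀ r ∈ Icc a b, 0 ≤ w r)
    (hfw : ∀ r ∈ Icc a b, f (w r) = w r ^ p) :
    ∀ r ∈ Icc a b, w r ≤ aprioriBound K κ ((b - a) / 4) p := fun r hr => by
  have hδ : 0 < (b - a) / 4 := by linarith
  obtain ⟨τ, hτ, hup, hdown⟩ := h.exists_turning_point hg hf hα hab.le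
  have hmono : MonotoneOn w (Icc a τ) :=
    monotoneOn_Icc_of_hasDerivAt_nonneg (fun t ht => h.deriv_fst t ⟨ht.1, ht.2.trans hτ.2⟩) hup
  have hmax : w r ≤ w τ := by
    rcases le_total r τ with hrτ | hτr
    · exact hmono ⟨hr.1, hrτ⟩ (right_mem_Icc.2 hτ.1) hrτ
    rcases hdown with rfl | hdown
    · exact (le_antisymm hr.2 hτr) ▸ le_rfl
    exact (h.isDecreasingSupersolution hg hw hfw hτ.1 hdown).antitoneOn
      (left_mem_Icc.2 hτ.2) ⟨hτr, hr.2⟩ hτr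
  refine hmax.trans ?_
  -- one of the two sides of the turning point has length at least `(b - a) / 2`
  rcases le_total ((a + b) / 2) τ with hleft | hright
  · simpa only [neg_neg] using
      (h.isDecreasingSupersolution_comp_neg hg hw hfw hτ.2 hup).le_aprioriBound K.2 hg.pos hp hδ
        (by linarith)
  · exact (h.isDecreasingSupersolution hg hw hfw hτ.1
      (hdown.resolve_left (by linarith))).le_aprioriBound K.2 hg.pos hp hδ (by linarith)

theorem right_nonneg_of_small (h : IsShot g f a b α w z) (hg : IsShootingField g K κ)
    (hf : ∀ u, 0 ≤ f u) (hfm : Monotone f) (hab : a ≤ b) (hα : 0 < α)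
    (hsmall : 2 * (exp (K * (b - a)) * K * (b - a)) * f (α * (b - a)) ≤ α) : 0 ≤ w b := by
  have hβ : 0 < α / (2 * exp (K * (b - a))) := by positivity
  refine (mul_nonneg hβ.le (sub_nonneg.2 hab)).trans (h.mul_length_le_right hg hf hab
    (fun r hr => hfm (h.le_mul_length hg hf hα.le hr)) hβ ?_)
  have hhalf : exp (K * (b - a)) * (α / (2 * exp (K * (b - a)))) = α / 2 := by field_simp
  rw [mul_add, hhalf]
  linarith

theorem right_nonpos_of_large (h : IsShot g f a b α w z) (hg : IsShootingField g K κ)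
    (hf : ∀ u, 0 ≤ f u) (hp : 1 < p) (hab : a < b) {H : ℝ}
    (hH : H = aprioriBound K κ ((b - a) / 4) p) (hfp : ∀ u ∈ Icc 0 (α * (b - a)), f u = u ^ p)
    (hlarge : exp (K * (b - a)) * (H / (b - a) + 1 + K * H ^ p * (b - a)) ≤ α) : w b ≤ 0 := by
  have hL : 0 < b - a := sub_pos.2 hab
  have hH0 : 0 ≤ H := hH ▸ aprioriBound_nonneg hg.pos.le
  have hα : 0 ≤ α := hlarge.trans' (by positivity)
  by_contra! hpos
  have hw := h.nonneg_of_right_nonneg hg hf hpos.le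
  have hfw : ∀ r ∈ Icc a b, f (w r) = w r ^ p := fun r hr =>
    hfp _ ⟨hw r hr, h.le_mul_length hg hf hα hr⟩
  have hwH : ∀ r ∈ Icc a b, w r ≤ H := hH ▸ h.le_aprioriBound hg hf hα hp hab hw hfw
  have hwb : (H / (b - a) + 1) * (b - a) ≤ w b := h.mul_length_le_right hg hf hab.le
    (fun r hr => (hfw r hr).trans_le (rpow_le_rpow (hw r hr) (hwH r hr) (by linarith)))
    (by positivity) hlarge
  rw [add_mul, div_mul_cancel₀ _ hL.ne'] at hwb
  linarith [hwH b (right_mem_Icc.2 hab.le)]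

theorem continuous_right {W Z : ℝ → ℝ → ℝ} (h : ∀ α, IsShot g f a b α (W α) (Z α))
    (hg : IsShootingField g K κ) (hfl : LipschitzWith Kf f) (hab : a ≤ b) :
    Continuous fun α => W α b := by
  obtain ⟨C, hC⟩ := hg.exists_lipschitzWith_planar hfl
  refine (LipschitzWith.of_dist_le_mul (K := .mk (exp (C * (b - a))) (exp_pos _).le)
    fun α β => ?_).continuous
  have hgronwall := dist_le_of_trajectories_ODE hC (h α).continuousOn_prodMk
    (fun r hr => ((h α).hasDerivAt_prodMk (Ico_subset_Icc_self hr)).hasDerivWithinAt)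
    (h β).continuousOn_prodMk
    (fun r hr => ((h β).hasDerivAt_prodMk (Ico_subset_Icc_self hr)).hasDerivWithinAt)
    (δ := dist α β)
    (by simp [Prod.dist_eq, (h α).left, (h β).left, (h α).slope, (h β).slope])
    b (right_mem_Icc.2 hab)
  rw [Prod.dist_eq, mul_comm] at hgronwall
  exact (le_max_left _ _).trans hgronwall

end IsShot

theorem IsShootingField.exists_pos_solution (hg : IsShootingField g K κ) (hp : 1 < p)
    (hab : a < b) :
    ∃ w z : ℝ → ℝ, (∀ r ∈ Icc a b, HasDerivAt w (z r) r) ∧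
      (∀ r ∈ Icc a b, HasDerivAt z (g r (z r) (w r ^ p)) r) ∧
      w a = 0 ∧ w b = 0 ∧ ∀ r ∈ Ioo a b, 0 < w r := by
  have hL : 0 < b - a := sub_pos.2 hab
  set H := aprioriBound K κ ((b - a) / 4) p with hH
  have hH0 : 0 ≤ H := aprioriBound_nonneg hg.pos.le
  set A := exp (K * (b - a)) * (H / (b - a) + 1 + K * H ^ p * (b - a))
  have hA0 : 0 < A := by positivity
  obtain ⟨α₀, hsmall, hα₀, hα₀A⟩ := ((eventually_mul_rpow_le_self
    (2 * (exp (K * (b - a)) * K * (b - a)) * (b - a) ^ p) hp).and (Ioc_mem_nhdsGT hA0)).exists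
  set f := truncPow p (A * (b - a))
  have hf : ∀ u, 0 ≤ f u := truncPow_nonneg _ _
  have hf0 : f 0 = 0 := truncPow_zero (by linarith) (by positivity)
  have hfp : ∀ α ≤ A, ∀ u ∈ Icc 0 (α * (b - a)), f u = u ^ p := fun α hα u hu =>
    truncPow_of_mem_Icc ⟨hu.1, hu.2.trans (mul_le_mul_of_nonneg_right hα hL.le)⟩
  obtain ⟨Kf, hfl⟩ : ∃ Kf : ℝ≥0, LipschitzWith Kf f :=
    exists_lipschitzWith_truncPow hp.le (by positivity)
  choose W Z hWZ using hg.exists_isShot hfl hab.le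
  have hnonneg : 0 ≤ W α₀ b := (hWZ α₀).right_nonneg_of_small hg hf
    (monotone_truncPow (by linarith)) hab.le hα₀ (by
      rw [hfp α₀ hα₀A _ ⟨by positivity, le_rfl⟩, mul_rpow hα₀.le hL.le]
      linarith)
  have hnonpos : W A b ≤ 0 := (hWZ A).right_nonpos_of_large hg hf hp hab hH (hfp A le_rfl) le_rfl
  obtain ⟨α, hα, hWα : W α b = 0⟩ := intermediate_value_Icc' hα₀A
    (IsShot.continuous_right hWZ hg hfl hab.le).continuousOn ⟨hnonpos, hnonneg⟩
  have hα0 : 0 < α := hα₀.trans_le hα.1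
  have hw := (hWZ α).nonneg_of_right_nonneg hg hf hWα.ge
  refine ⟨W α, Z α, (hWZ α).deriv_fst, fun r hr => ?_, (hWZ α).left, hWα,
    (hWZ α).pos_of_right_eq_zero hg hf hfl hf0 hα0.ne' hWα⟩
  rw [← hfp α hα.2 _ ⟨hw r hr, (hWZ α).le_mul_length hg hf hα0.le hr⟩]
  exact (hWZ α).deriv_snd r hr

end Shooting

section Ellipticity

open Filter Topology
open scoped NNReal

variable {n : ℕ} {lam Lam : ℝ} {F G : ℝ → ℝ → ℝ → ℝ}

/-- `G r l c` is the second derivative `m` prescribed by the equation `-F r m l = c`, where `l`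
stands for `w' / r` and `c` for the value of the nonlinearity. -/
def IsPrescribedSecondDeriv (F G : ℝ → ℝ → ℝ → ℝ) : Prop :=
  ∀ r, 0 < r → ∀ l c, F r (G r l c) l = -c

namespace UnifElliptic

theorem lam_le_Lam (h : UnifElliptic n lam Lam F) : lam ≤ Lam := by
  obtain ⟨hlower, hupper⟩ := h 1 one_pos 0 0 1 0 zero_le_one le_rfl
  simpa using hlower.trans hupper

theorem sub_snd (h : UnifElliptic n lam Lam F) {r m m' : ℝ} (hr : 0 < r) (l : ℝ) (hm : m' ≤ m) :
    lam * (m - m') ≤ F r m l - F r m' l ∧ F r m l - F r m' l ≤ Lam * (m - m') := by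
  simpa using h r hr m' l (m - m') 0 (sub_nonneg.2 hm) le_rfl

theorem sub_thd (h : UnifElliptic n lam Lam F) {r l l' : ℝ} (hr : 0 < r) (m : ℝ) (hl : l' ≤ l) :
    lam * (((n : ℝ) - 1) * (l - l')) ≤ F r m l - F r m l' ∧
      F r m l - F r m l' ≤ Lam * (((n : ℝ) - 1) * (l - l')) := by
  simpa using h r hr m l' 0 (l - l') le_rfl (sub_nonneg.2 hl)

theorem mul_abs_sub_le (h : UnifElliptic n lam Lam F) {r : ℝ} (hr : 0 < r) (m m' l : ℝ) :
    lam * |m - m'| ≤ |F r m l - F r m' l| := by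
  wlog hm : m' ≤ m generalizing m m'
  · rw [abs_sub_comm, abs_sub_comm (F r m l)]
    exact this m' m (le_of_not_ge hm)
  rw [abs_of_nonneg (sub_nonneg.2 hm)]
  exact (h.sub_snd hr l hm).1.trans (le_abs_self _)

theorem abs_sub_snd_le (h : UnifElliptic n lam Lam F) (hlam : 0 ≤ lam) {r : ℝ} (hr : 0 < r)
    (m m' l : ℝ) : |F r m l - F r m' l| ≤ Lam * |m - m'| := by
  wlog hm : m' ≤ m generalizing m m'
  · rw [abs_sub_comm, abs_sub_comm m]
    exact this m' m (le_of_not_ge hm)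
  obtain ⟨hlower, hupper⟩ := h.sub_snd hr l hm
  rwa [abs_of_nonneg (hlower.trans' (mul_nonneg hlam (sub_nonneg.2 hm))),
    abs_of_nonneg (sub_nonneg.2 hm)]

theorem abs_sub_thd_le (h : UnifElliptic n lam Lam F) (hn : 1 ≤ n) (hlam : 0 ≤ lam) {r : ℝ}
    (hr : 0 < r) (m l l' : ℝ) : |F r m l - F r m l'| ≤ Lam * ((n : ℝ) - 1) * |l - l'| := by
  have hn' : 0 ≤ (n : ℝ) - 1 := sub_nonneg.2 (Nat.one_le_cast.2 hn)
  wlog hl : l' ≤ l generalizing l l'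
  · rw [abs_sub_comm, abs_sub_comm l]
    exact this l' l (le_of_not_ge hl)
  obtain ⟨hlower, hupper⟩ := h.sub_thd hr m hl
  rwa [abs_of_nonneg (hlower.trans' (mul_nonneg hlam (mul_nonneg hn' (sub_nonneg.2 hl)))),
    abs_of_nonneg (sub_nonneg.2 hl), mul_assoc]

theorem neg_comp_neg (h : UnifElliptic n lam Lam F) :
    UnifElliptic n lam Lam fun r m l => -F r (-m) (-l) := fun r hr m l s t hs ht => by
  have hell := h r hr (-(m + s)) (-(l + t)) s t hs ht
  rw [neg_add_rev, neg_add_cancel_comm, neg_add_rev, neg_add_cancel_comm] at hell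
  simpa only [neg_add_rev, neg_sub_neg] using hell

theorem exists_eq (h : UnifElliptic n lam Lam F) (hlam : 0 < lam) {r : ℝ} (hr : 0 < r)
    (l c : ℝ) : ∃ m, F r m l = c := by
  have hcont : Continuous fun m => F r m l := (LipschitzWith.of_dist_le_mul
    (K := .mk Lam (hlam.le.trans h.lam_le_Lam)) fun m m' =>
      h.abs_sub_snd_le hlam.le hr m m' l).continuous
  set s := |c - F r 0 l| / lam
  have hs : 0 ≤ s := by positivity
  have hlams : lam * s = |c - F r 0 l| := mul_div_cancel₀ _ hlam.ne'
  refine mem_range_of_exists_le_of_exists_ge hcont ⟨-s, ?_⟩ ⟨s, ?_⟩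
  · linarith [(h.sub_snd hr l (neg_nonpos.2 hs)).1, neg_abs_le (c - F r 0 l)]
  · linarith [(h.sub_snd hr l hs).1, le_abs_self (c - F r 0 l)]

theorem exists_isPrescribedSecondDeriv (h : UnifElliptic n lam Lam F) (hlam : 0 < lam) :
    ∃ G, IsPrescribedSecondDeriv F G := by
  choose! G hG using fun (r : ℝ) (hr : 0 < r) (l c : ℝ) => h.exists_eq hlam hr l (-c)
  exact ⟨G, hG⟩

end UnifElliptic

namespace IsPrescribedSecondDeriv

theorem mul_abs_sub_le (hG : IsPrescribedSecondDeriv F G) (h : UnifElliptic n lam Lam F)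
    (hn : 1 ≤ n) (hlam : 0 ≤ lam) {r : ℝ} (hr : 0 < r) (l l' c c' : ℝ) :
    lam * |G r l c - G r l' c'| ≤ Lam * ((n : ℝ) - 1) * |l - l'| + |c - c'| :=
  calc lam * |G r l c - G r l' c'| ≤ |F r (G r l c) l - F r (G r l' c') l| :=
        h.mul_abs_sub_le hr _ _ l
    _ = |(F r (G r l' c') l' - F r (G r l' c') l) + (c' - c)| := by
        rw [hG r hr, hG r hr]
        congr 1
        ring
    _ ≤ |F r (G r l' c') l' - F r (G r l' c') l| + |c' - c| := abs_add_le _ _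
    _ ≤ Lam * ((n : ℝ) - 1) * |l - l'| + |c - c'| := by
        rw [abs_sub_comm l, abs_sub_comm c]
        exact add_le_add_left (h.abs_sub_thd_le hn hlam hr _ l' l) _

theorem exists_lipschitzWith (hG : IsPrescribedSecondDeriv F G) (h : UnifElliptic n lam Lam F)
    (hn : 1 ≤ n) (hlam : 0 < lam) :
    ∃ K : ℝ≥0, ∀ r, 0 < r → LipschitzWith K fun x : ℝ × ℝ => G r x.1 x.2 := by
  have hN : 0 ≤ Lam * ((n : ℝ) - 1) :=
    mul_nonneg (hlam.le.trans h.lam_le_Lam) (sub_nonneg.2 (Nat.one_le_cast.2 hn))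
  refine ⟨.mk ((Lam * ((n : ℝ) - 1) + 1) / lam) (by positivity), fun r hr =>
    LipschitzWith.of_dist_le_mul fun x y => ?_⟩
  have hfst : |x.1 - y.1| ≤ dist x y := le_max_left _ _
  have hsnd : |x.2 - y.2| ≤ dist x y := le_max_right _ _
  rw [NNReal.coe_mk, div_mul_eq_mul_div, le_div_iff₀ hlam, mul_comm, Real.dist_eq, add_one_mul]
  exact (hG.mul_abs_sub_le h hn hlam.le hr _ _ _ _).trans (by gcongr)

theorem continuousOn_time (hG : IsPrescribedSecondDeriv F G) (h : UnifElliptic n lam Lam F)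
    (hlam : 0 < lam) (hF : ∀ m l, ContinuousOn (fun r => F r m l) (Ioi 0)) (l c : ℝ) :
    ContinuousOn (fun r => G r l c) (Ioi 0) := by
  intro r₀ hr₀
  have hlim : Tendsto (fun r => |-c - F r (G r₀ l c) l| / lam) (𝓝[Ioi 0] r₀) (𝓝 0) := by
    have hcont : ContinuousWithinAt (fun r => |-c - F r (G r₀ l c) l| / lam) (Ioi 0) r₀ :=
      (continuousWithinAt_const.sub (hF _ l r₀ hr₀)).abs.div_const lam
    simpa only [ContinuousWithinAt, hG r₀ hr₀, sub_self, abs_zero, zero_div] using hcont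
  rw [ContinuousWithinAt, tendsto_iff_dist_tendsto_zero]
  refine squeeze_zero' (.of_forall fun _ => dist_nonneg) ?_ hlim
  filter_upwards [self_mem_nhdsWithin] with r hr
  rw [Real.dist_eq, le_div_iff₀ hlam, mul_comm, ← hG r hr l c]
  exact h.mul_abs_sub_le hr _ _ l

theorem continuousOn_uncurry (hG : IsPrescribedSecondDeriv F G) (h : UnifElliptic n lam Lam F)
    (hn : 1 ≤ n) (hlam : 0 < lam) (hF : ∀ m l, ContinuousOn (fun r => F r m l) (Ioi 0)) :
    ContinuousOn (fun x : ℝ × ℝ × ℝ => G x.1 x.2.1 x.2.2) (Ioi 0 ×ˢ univ) := by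
  obtain ⟨K, hK⟩ := hG.exists_lipschitzWith h hn hlam
  exact continuousOn_prod_of_continuousOn_lipschitzOnWith' _ K
    (fun r hr => (hK r hr).lipschitzOnWith) fun x _ => hG.continuousOn_time h hlam hF x.1 x.2

theorem apply_zero (hG : IsPrescribedSecondDeriv F G) (h : UnifElliptic n lam Lam F)
    (hlam : 0 < lam) {r : ℝ} (hr : 0 < r) (hF0 : F r 0 0 = 0) : G r 0 0 = 0 := by
  have hle := h.mul_abs_sub_le hr (G r 0 0) 0 0
  rw [hG r hr, hF0, sub_zero, neg_zero, sub_zero, abs_zero] at hle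
  exact abs_nonpos_iff.1 (nonpos_of_mul_nonpos_right hle hlam)

theorem nonpos (hG : IsPrescribedSecondDeriv F G) (h : UnifElliptic n lam Lam F) (hn : 1 ≤ n)
    (hlam : 0 < lam) {r l c : ℝ} (hr : 0 < r) (hF0 : F r 0 0 = 0) (hl : 0 ≤ l) (hc : 0 ≤ c) :
    G r l c ≤ 0 := by
  by_contra! hpos
  have hell := (h r hr 0 0 (G r l c) l hpos.le hl).1
  rw [zero_add, zero_add, hG r hr, hF0, sub_zero] at hell
  have hn' : 0 ≤ (n : ℝ) - 1 := sub_nonneg.2 (Nat.one_le_cast.2 hn)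
  have : 0 < lam * (G r l c + ((n : ℝ) - 1) * l) := by positivity
  linarith

theorem apply_zero_le (hG : IsPrescribedSecondDeriv F G) (h : UnifElliptic n lam Lam F)
    (hn : 1 ≤ n) (hlam : 0 < lam) {r c : ℝ} (hr : 0 < r) (hF0 : F r 0 0 = 0) (hc : 0 ≤ c) :
    G r 0 c ≤ -(Lam⁻¹ * c) := by
  have hupper := (h.sub_snd hr 0 (hG.nonpos h hn hlam hr hF0 le_rfl hc)).2
  rw [hF0, hG r hr, sub_neg_eq_add, zero_add, zero_sub] at hupper
  rw [le_neg, inv_mul_le_iff₀ (hlam.trans_le h.lam_le_Lam)]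
  exact hupper

/-- Freezing the radius below `a` avoids the singularity of `w' / r` at the origin. -/
theorem exists_isShootingField (hG : IsPrescribedSecondDeriv F G) (h : UnifElliptic n lam Lam F)
    (hn : 1 ≤ n) (hlam : 0 < lam) (hF : ∀ m l, ContinuousOn (fun r => F r m l) (Ioi 0))
    (hF0 : ∀ r, 0 < r → F r 0 0 = 0) {a : ℝ} (ha : 0 < a) :
    ∃ K, IsShootingField (fun r q c => G (max a r) (q / max a r) c) K Lam⁻¹ := by
  obtain ⟨K, hK⟩ := hG.exists_lipschitzWith h hn hlam
  have hpos : ∀ r, 0 < max a r := fun r => lt_max_of_lt_left ha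
  have hscale : ∀ r, LipschitzWith (.mk a⁻¹ (inv_nonneg.2 ha.le)) fun q : ℝ => q / max a r :=
    fun r => LipschitzWith.of_dist_le_mul fun q q' => by
      rw [Real.dist_eq, ← sub_div, abs_div, abs_of_pos (hpos r), div_eq_inv_mul]
      exact mul_le_mul_of_nonneg_right (inv_anti₀ ha (le_max_left a r)) (abs_nonneg _)
  have hmax : Continuous fun r => max a r := continuous_const.max continuous_id
  refine ⟨_, ⟨inv_pos.2 (hlam.trans_le h.lam_le_Lam), fun q c => ?_, fun r => (hK _ (hpos r)).comp
    (((hscale r).comp LipschitzWith.prod_fst).prodMk LipschitzWith.prod_snd), fun r => ?_,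
    fun r c hc => ?_, fun r q c hq hc =>
      hG.nonpos h hn hlam (hpos r) (hF0 _ (hpos r)) (div_nonneg hq (hpos r).le) hc⟩⟩
  · exact (hG.continuousOn_uncurry h hn hlam hF).comp_continuous
      (hmax.prodMk ((continuous_const.div hmax fun r => (hpos r).ne').prodMk continuous_const))
      fun r => ⟨hpos r, mem_univ _⟩
  · rw [zero_div, hG.apply_zero h hlam (hpos r) (hF0 _ (hpos r))]
  · rw [zero_div]
    exact hG.apply_zero_le h hn hlam (hpos r) (hF0 _ (hpos r)) hc

end IsPrescribedSecondDeriv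

theorem UnifElliptic.exists_pos_radial_solution (h : UnifElliptic n lam Lam F) (hn : 1 ≤ n)
    (hlam : 0 < lam) (hF : ∀ m l, ContinuousOn (fun r => F r m l) (Ioi 0))
    (hF0 : ∀ r, 0 < r → F r 0 0 = 0) {p a b : ℝ} (hp : 1 < p) (ha : 0 < a) (hab : a < b) :
    ∃ w w' w'' : ℝ → ℝ,
      (∀ r ∈ Icc a b, HasDerivAt w (w' r) r) ∧
      (∀ r ∈ Icc a b, HasDerivAt w' (w'' r) r) ∧
      ContinuousOn w'' (Icc a b) ∧
      w a = 0 ∧ w b = 0 ∧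
      (∀ r ∈ Ioo a b, 0 < w r) ∧
      (∀ r ∈ Ioo a b, -F r (w'' r) (w' r / r) = w r ^ p) := by
  obtain ⟨G, hG⟩ := h.exists_isPrescribedSecondDeriv hlam
  obtain ⟨K, hg⟩ := hG.exists_isShootingField h hn hlam hF hF0 ha
  obtain ⟨w, z, hw, hz, hwa, hwb, hpos⟩ := hg.exists_pos_solution hp hab
  have hr0 : ∀ r ∈ Icc a b, 0 < r := fun r hr => ha.trans_le hr.1
  refine ⟨w, z, fun r => G r (z r / r) (w r ^ p), hw, fun r hr => ?_, ?_, hwa, hwb, hpos,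
    fun r hr => ?_⟩
  · simpa only [max_eq_right hr.1] using hz r hr
  · have hinner : ContinuousOn (fun r => (r, z r / r, w r ^ p)) (Icc a b) :=
      continuousOn_id.prodMk (((HasDerivAt.continuousOn hz).div continuousOn_id
        fun r hr => (hr0 r hr).ne').prodMk
          ((HasDerivAt.continuousOn hw).rpow_const fun _ _ => .inr (by linarith)))
    exact (hG.continuousOn_uncurry h hn hlam hF).comp hinner fun r hr => ⟨hr0 r hr, mem_univ _⟩
  · rw [hG r (hr0 r (Ioo_subset_Icc_self hr)), neg_neg]

end Ellipticity

theorem positive_and_negative_radial_solutions_in_annulus_general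
    {n : ℕ} (hn : 1 ≤ n) {lam Lam p : ℝ} (hlam : 0 < lam) (hp : 1 < p) {F : ℝ → ℝ → ℝ → ℝ}
    (hF : ∀ m l, ContinuousOn (fun r => F r m l) (Ioi 0)) (hF0 : ∀ r, 0 < r → F r 0 0 = 0)
    (hFell : UnifElliptic n lam Lam F) {a b : ℝ} (ha : 0 < a) (hab : a < b) :
    (∃ w w' w'' : ℝ → ℝ,
      (∀ r ∈ Icc a b, HasDerivAt w (w' r) r) ∧
      (∀ r ∈ Icc a b, HasDerivAt w' (w'' r) r) ∧
      ContinuousOn w'' (Icc a b) ∧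
      w a = 0 ∧ w b = 0 ∧
      (∀ r ∈ Ioo a b, 0 < w r) ∧
      (∀ r ∈ Ioo a b, -F r (w'' r) (w' r / r) = w r ^ p)) ∧
    (∃ w w' w'' : ℝ → ℝ,
      (∀ r ∈ Icc a b, HasDerivAt w (w' r) r) ∧
      (∀ r ∈ Icc a b, HasDerivAt w' (w'' r) r) ∧
      ContinuousOn w'' (Icc a b) ∧
      w a = 0 ∧ w b = 0 ∧
      (∀ r ∈ Ioo a b, w r < 0) ∧
      (∀ r ∈ Ioo a b, -F r (w'' r) (w' r / r) = -(|w r| ^ p))) := by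
  refine ⟨hFell.exists_pos_radial_solution hn hlam hF hF0 hp ha hab, ?_⟩
  obtain ⟨w, w', w'', hw, hw', hw'', hwa, hwb, hpos, heq⟩ :=
    hFell.neg_comp_neg.exists_pos_radial_solution hn hlam (fun m l => (hF (-m) (-l)).neg)
      (fun r hr => by simp only [neg_zero, hF0 r hr]) hp ha hab
  refine ⟨-w, -w', -w'', fun r hr => (hw r hr).neg, fun r hr => (hw' r hr).neg, hw''.neg,
    by simp [hwa], by simp [hwb], fun r hr => neg_lt_zero.2 (hpos r hr), fun r hr => ?_⟩
  simp only [Pi.neg_apply, neg_div, abs_neg, abs_of_pos (hpos r hr), ← heq r hr, neg_neg]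

/-- Theorem 1 (paper): the Dirichlet problem `−F(x,D²u) = |u|^{p−1}u` in the annulus
`A_{a,b}` has a positive and a negative radial solution for every `p > 1`. -/
theorem positive_and_negative_radial_solutions_in_annulus
    (n : ℕ) (hn : 2 ≤ n) (lam Lam p : ℝ) (hlam : 0 < lam) (hlL : lam ≤ Lam) (hp : 1 < p)
    (F : ℝ → ℝ → ℝ → ℝ)
    (hFcont : Continuous fun x : ℝ × ℝ × ℝ => F x.1 x.2.1 x.2.2)
    (hF0 : ∀ r : ℝ, F r 0 0 = 0)
    (hFell : UnifElliptic n lam Lam F)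
    (a b : ℝ) (ha : 0 < a) (hab : a < b) :
    (∃ w w' w'' : ℝ → ℝ,
      (∀ r ∈ Icc a b, HasDerivAt w (w' r) r) ∧
      (∀ r ∈ Icc a b, HasDerivAt w' (w'' r) r) ∧
      ContinuousOn w'' (Icc a b) ∧
      w a = 0 ∧ w b = 0 ∧
      (∀ r ∈ Ioo a b, 0 < w r) ∧
      (∀ r ∈ Ioo a b, -F r (w'' r) (w' r / r) = w r ^ p)) ∧
    (∃ w w' w'' : ℝ → ℝ,
      (∀ r ∈ Icc a b, HasDerivAt w (w' r) r) ∧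
      (∀ r ∈ Icc a b, HasDerivAt w' (w'' r) r) ∧
      ContinuousOn w'' (Icc a b) ∧
      w a = 0 ∧ w b = 0 ∧
      (∀ r ∈ Ioo a b, w r < 0) ∧
      (∀ r ∈ Ioo a b, -F r (w'' r) (w' r / r) = -(|w r| ^ p))) :=
  positive_and_negative_radial_solutions_in_annulus_general (one_le_two.trans hn) hlam hp
    (fun m l => (hFcont.comp (continuous_id.prodMk (continuous_const (y := (m, l))))).continuousOn)
    (fun r _ => hF0 r) hFell ha hab
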